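/- arXiv:2407.16980 — 2 statements merged into one kernel-verified Lean document; each statement's English description precedes it below -/
import Mathlib

section
/- There is a universal constant C such that for every square-integrable martingale difference sequence {Y_m}_{m=1}^n (n ≥ 2) with Σ_{i=1}^n σ_i²(Y) = s_n² almost surely, Z_3(X_n, N) ≤ C · s_n^{-3} Σ_{i=1}^n E[|Y_i|³], where N is a standard normal random variable. -/
open MeasureTheory ProbabilityTheory Real Filter

noncomputable section

/-- `E[|U|^q]^{1/q}`. -/
def rnorm {Ω : Type*} [MeasurableSpace Ω] (μ : Measure Ω) (q : ℝ) (U : Ω → ℝ) : ℝ :=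
  (∫ ω, |U ω| ^ q ∂μ) ^ (1 / q)

/-- Wasserstein distance of order `r` between two laws on `ℝ`, defined as the infimum of
`E[|U'-V'|^r]^{1/r}` over all couplings. -/
def wassersteinDist (r : ℝ) (μ ν : Measure ℝ) : ℝ :=
  sInf { d : ℝ | ∃ cpl : Measure (ℝ × ℝ), IsProbabilityMeasure cpl ∧
    cpl.map Prod.fst = μ ∧ cpl.map Prod.snd = ν ∧
    d = (∫ p, |p.1 - p.2| ^ r ∂cpl) ^ (1 / r) }

/-- The standard normal law on `ℝ`. -/
def stdGaussian : Measure ℝ := gaussianReal 0 1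

/-- `{Y_i}_{i=1}^n` is a square-integrable martingale difference sequence w.r.t. `F`. -/
structure IsMDS {Ω : Type*} [m0 : MeasurableSpace Ω] (μ : Measure Ω)
    (F : ℕ → MeasurableSpace Ω) (n : ℕ) (Y : ℕ → Ω → ℝ) : Prop where
  protected le : ∀ i, F i ≤ m0
  protected mono : Monotone F
  protected adapted : ∀ i, 1 ≤ i → i ≤ n → Measurable[F i] (Y i)
  protected memL2 : ∀ i, 1 ≤ i → i ≤ n → MemLp (Y i) 2 μ
  protected mdiff : ∀ i, 1 ≤ i → i ≤ n → μ[Y i | F (i - 1)] =ᵐ[μ] 0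

/-- An N-function. -/
def IsNFunction (φ : ℝ → ℝ) : Prop :=
  ConvexOn ℝ (Set.Ici 0) φ ∧ (∀ x, 0 ≤ x → 0 ≤ φ x) ∧
  Tendsto (fun x => φ x / x) (nhdsWithin 0 (Set.Ioi 0)) (nhds 0) ∧
  Tendsto (fun x => φ x / x) atTop atTop ∧
  (∀ x, 0 < x → 0 < φ x)

/-- `φ₁ ≼ φ₂` : the ratio `φ₂/φ₁` is non-decreasing on `(0,∞)`. -/
def Dominates (φ₁ φ₂ : ℝ → ℝ) : Prop :=
  MonotoneOn (fun x => φ₂ x / φ₁ x) (Set.Ioi (0 : ℝ))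

/-- Generalized inverse of `φ` on `[0,∞)`. -/
def ninv (φ : ℝ → ℝ) (y : ℝ) : ℝ := sInf {x : ℝ | 0 ≤ x ∧ y ≤ φ x}

/-- Orlicz norm of the finite sequence `{Y_i}_{i=1}^n`. -/
def orliczSeqNorm {Ω : Type*} [MeasurableSpace Ω] (μ : Measure Ω) (φ : ℝ → ℝ)
    (n : ℕ) (Y : ℕ → Ω → ℝ) : ℝ :=
  sInf {c : ℝ | 0 < c ∧ (1 / n : ℝ) * ∑ i ∈ Finset.Icc 1 n, ∫ ω, φ (|Y i ω| / c) ∂μ ≤ 1}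


open scoped ENNReal

/-- Zolotarev's ideal distance of integer order `r`: the supremum of `E f(U) - E f(V)` over
`(r-1)`-times differentiable `f` whose `(r-1)`-st derivative is `1`-Lipschitz. -/
def zolotarev {Ω : Type*} [MeasurableSpace Ω] (r : ℕ) (μ : Measure Ω) (U : Ω → ℝ)
    (ν : Measure ℝ) : ℝ :=
  sSup { d : ℝ | ∃ f : ℝ → ℝ, ContDiff ℝ (r - 1 : ℕ) f ∧
    LipschitzWith 1 (iteratedDeriv (r - 1) f) ∧
    d = (∫ ω, f (U ω) ∂μ) - ∫ x, f x ∂ν }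

/-- The Fenchel–Legendre transform of `φ` (with the supremum over `y ≥ 0`). -/
def fenchel (φ : ℝ → ℝ) (x : ℝ) : ℝ := sSup ((fun y => x * y - φ y) '' Set.Ici 0)

/-- `C_φ = sup_{x,y>0} (φ⁻¹(x)φ_*⁻¹(x)/x) / (φ⁻¹(y)φ_*⁻¹(y)/y)`. -/
def nratioConst (φ : ℝ → ℝ) : ℝ :=
  sSup { r : ℝ | ∃ x > (0:ℝ), ∃ y > (0:ℝ),
    r = (ninv φ x * ninv (fenchel φ) x / x) / (ninv φ y * ninv (fenchel φ) y / y) }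

/-- `λ_m = ( Σ_{i=m+1}^n σ_i²(Y) + β² s_n² )^{1/2}`. -/
def lamCV {Ω : Type*} [MeasurableSpace Ω] (μ : Measure Ω) (F : ℕ → MeasurableSpace Ω)
    (n : ℕ) (Y : ℕ → Ω → ℝ) (sn β : ℝ) (m : ℕ) (ω : Ω) : ℝ :=
  Real.sqrt ((∑ j ∈ Finset.Icc (m + 1) n, (μ[fun ω' => Y j ω' ^ 2 | F (j - 1)]) ω)
    + β ^ 2 * sn ^ 2)



/-- Gaussian smoothing of `f` at variance `t`. -/
def gsm (f : ℝ → ℝ) (t x : ℝ) : ℝ := ∫ z, f (x + √t * z) ∂(gaussianReal 0 1)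

lemma gauss_int_pow (k : ℕ) : Integrable (fun z : ℝ => |z| ^ k) (gaussianReal 0 1) := by
  have h := (memLp_id_gaussianReal' (μ := 0) (v := 1) (k : ℝ≥0∞) (by simp)).integrable_norm_pow'
  simpa using h

lemma bd_int (A a r : ℝ) (k : ℕ) : Integrable (fun z : ℝ => A * (1 + 2 ^ k * (a + r * |z| ^ k)))
    (gaussianReal 0 1) :=
  ((integrable_const _).add
    (((integrable_const _).add ((gauss_int_pow k).const_mul _)).const_mul _)).const_mul _

lemma integral_sub4 {α : Type*} [MeasurableSpace α] {ν : Measure α} {a b c d : α → ℝ}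
    (ha : Integrable a ν) (hb : Integrable b ν) (hc : Integrable c ν) (hd : Integrable d ν) :
    ∫ z, (a z - b z - c z - d z) ∂ν =
      (∫ z, a z ∂ν) - (∫ z, b z ∂ν) - (∫ z, c z ∂ν) - ∫ z, d z ∂ν := by
  have h1 : Integrable (fun z => a z - b z) ν := ha.sub hb
  have h2 : Integrable (fun z => a z - b z - c z) ν := h1.sub hc
  rw [integral_sub h2 hd, integral_sub h1 hc, integral_sub ha hb]

lemma abs_add_pow_le (a b : ℝ) (k : ℕ) : |a + b| ^ k ≤ 2 ^ k * (|a| ^ k + |b| ^ k) := by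
  have h1 : |a + b| ^ k ≤ (|a| + |b|) ^ k := pow_le_pow_left₀ (abs_nonneg _) (abs_add_le a b) k
  have h2 := add_pow_le (abs_nonneg a) (abs_nonneg b) k
  have h3 : (2:ℝ) ^ (k - 1) ≤ 2 ^ k := pow_le_pow_right₀ (by norm_num) (Nat.sub_le k 1)
  have h4 : 0 ≤ |a| ^ k + |b| ^ k := by positivity
  nlinarith

lemma growth_bd {f : ℝ → ℝ} {A : ℝ} {k : ℕ} (hA0 : 0 ≤ A) (hA : ∀ x, |f x| ≤ A * (1 + |x| ^ k))
    (x r z : ℝ) : |f (x + r * z)| ≤ A * (1 + 2 ^ k * (|x| ^ k + |r| ^ k * |z| ^ k)) := by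
  refine (hA _).trans ?_
  have := abs_add_pow_le x (r * z) k
  rw [abs_mul, mul_pow] at this
  gcongr

lemma gsm_integrable {f : ℝ → ℝ} (hf : Continuous f) {A : ℝ} {k : ℕ} (hA0 : 0 ≤ A)
    (hA : ∀ x, |f x| ≤ A * (1 + |x| ^ k)) (x r : ℝ) :
    Integrable (fun z => f (x + r * z)) (gaussianReal 0 1) := by
  refine Integrable.mono' (g := fun z => A * (1 + 2 ^ k * (|x| ^ k + |r| ^ k * |z| ^ k))) ?_ ?_ ?_
  · exact bd_int _ _ _ _
  · exact (hf.comp (by fun_prop)).aestronglyMeasurable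
  · exact Eventually.of_forall fun z => growth_bd hA0 hA x r z

lemma gsm_growth {f : ℝ → ℝ} (hf : Continuous f) {A : ℝ} {k : ℕ} (hA0 : 0 ≤ A)
    (hA : ∀ x, |f x| ≤ A * (1 + |x| ^ k)) (s : ℝ) (hs : 0 ≤ s) :
    ∃ B, 0 ≤ B ∧ ∀ t x, t ≤ s ^ 2 → |gsm f t x| ≤ B * (1 + |x| ^ k) := by
  set κ := ∫ z, |z| ^ k ∂(gaussianReal 0 1) with hκ
  have hκ0 : 0 ≤ κ := integral_nonneg fun z => by positivity
  refine ⟨A * (1 + 2 ^ k + 2 ^ k * s ^ k * κ), by positivity, fun t x ht => ?_⟩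
  have hr : |√t| ≤ s := by
    rw [abs_of_nonneg (Real.sqrt_nonneg _)]
    exact (Real.sqrt_le_sqrt ht).trans (by rw [Real.sqrt_sq hs])
  have h1 : |gsm f t x| ≤ ∫ z, A * (1 + 2 ^ k * (|x| ^ k + |√t| ^ k * |z| ^ k)) ∂(gaussianReal 0 1) := by
    unfold gsm
    refine (abs_integral_le_integral_abs).trans ?_
    refine integral_mono (gsm_integrable hf hA0 hA x _).abs ?_ (fun z => growth_bd hA0 hA x _ z)
    exact bd_int _ _ _ _
  have h2 : ∫ z, A * (1 + 2 ^ k * (|x| ^ k + |√t| ^ k * |z| ^ k)) ∂(gaussianReal 0 1)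
      = A * (1 + 2 ^ k * (|x| ^ k + |√t| ^ k * κ)) := by
    rw [integral_const_mul, integral_add (integrable_const _), integral_const_mul,
      integral_add (integrable_const _), integral_const_mul]
    · simp [hκ]
    · exact (gauss_int_pow k).const_mul _
    · exact ((integrable_const _).add ((gauss_int_pow k).const_mul _)).const_mul _
  rw [h2] at h1
  refine h1.trans ?_
  have h3 : |√t| ^ k ≤ s ^ k := by gcongr
  have h4 : |√t| ^ k * κ ≤ s ^ k * κ := by gcongr
  rw [mul_assoc]
  refine mul_le_mul_of_nonneg_left ?_ hA0
  have h5 : 0 ≤ |x| ^ k := by positivity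
  have h6 : (0:ℝ) ≤ 2 ^ k := by positivity
  have h7 : 0 ≤ 2 ^ k * s ^ k * κ * |x| ^ k := by positivity
  have h8 := mul_le_mul_of_nonneg_left h4 h6
  nlinarith

lemma gsm_meas {f : ℝ → ℝ} (hf : Continuous f) : Measurable (fun p : ℝ × ℝ => gsm f p.1 p.2) := by
  have h : StronglyMeasurable (fun q : (ℝ × ℝ) × ℝ => f (q.1.2 + √q.1.1 * q.2)) :=
    (hf.comp (by fun_prop)).stronglyMeasurable
  exact (h.integral_prod_right' (ν := gaussianReal 0 1)).measurable

lemma gsm_eq {f : ℝ → ℝ} (hf : Continuous f) (t : NNReal) (x : ℝ) :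
    gsm f t x = ∫ z, f (x + z) ∂(gaussianReal 0 t) := by
  have h := gaussianReal_map_const_mul (μ := 0) (v := 1) (√(t:ℝ))
  have h2 : (gaussianReal 0 1).map (√(t:ℝ) * ·) = gaussianReal 0 t := by
    rw [h]; congr 1
    · simp
    · ext; simp
  rw [← h2, integral_map (by fun_prop)]
  · rfl
  · exact (hf.comp (by fun_prop)).aestronglyMeasurable

lemma gauss_integrable {f : ℝ → ℝ} (hf : Continuous f) {A : ℝ} {k : ℕ} (hA0 : 0 ≤ A)
    (hA : ∀ x, |f x| ≤ A * (1 + |x| ^ k)) (x : ℝ) (t : NNReal) :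
    Integrable (fun z => f (x + z)) (gaussianReal 0 t) := by
  have h := gaussianReal_map_const_mul (μ := 0) (v := 1) (√(t:ℝ))
  have h2 : (gaussianReal 0 1).map (√(t:ℝ) * ·) = gaussianReal 0 t := by
    rw [h]; congr 1
    · simp
    · ext; simp
  rw [← h2, integrable_map_measure _ (by fun_prop)]
  · exact gsm_integrable hf hA0 hA x _
  · exact (hf.comp (by fun_prop)).aestronglyMeasurable

lemma gsm_add {f : ℝ → ℝ} (hf : Continuous f) {A : ℝ} {k : ℕ} (hA0 : 0 ≤ A)
    (hA : ∀ x, |f x| ≤ A * (1 + |x| ^ k)) {a b : ℝ} (ha : 0 ≤ a) (hb : 0 ≤ b) (x : ℝ) :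
    gsm f (a + b) x = ∫ z, gsm f a (x + √b * z) ∂(gaussianReal 0 1) := by
  lift a to NNReal using ha
  lift b to NNReal using hb
  have h0 := gsm_eq hf (b + a) x
  have hc : gaussianReal 0 (b + a) = (gaussianReal 0 b) ∗ (gaussianReal 0 a) := by
    rw [gaussianReal_conv_gaussianReal]; simp
  have h1 := gauss_integrable hf hA0 hA x (b + a)
  rw [hc] at h1 h0
  rw [integral_conv h1] at h0
  rw [add_comm (a : ℝ), ← NNReal.coe_add, h0]
  have h2 := gaussianReal_map_const_mul (μ := 0) (v := 1) (√(b:ℝ))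
  have h3 : (gaussianReal 0 1).map (√(b:ℝ) * ·) = gaussianReal 0 b := by
    rw [h2]; congr 1
    · simp
    · ext; simp
  have h4 : ∀ y, ∫ z, f (x + (y + z)) ∂(gaussianReal 0 a) = gsm f a (x + y) := by
    intro y
    rw [gsm_eq hf]
    simp only [add_assoc]
  simp only [h4]
  rw [← h3, integral_map (by fun_prop)]
  exact ((gsm_meas hf).comp (f := fun y => ((a:ℝ), x + y)) (by fun_prop)).aestronglyMeasurable

/-- Third-order Taylor control of `f`, with growth bounds. -/
structure TayData (f f1 f2 : ℝ → ℝ) (K A : ℝ) : Prop where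
  c0 : Continuous f
  c1 : Continuous f1
  c2 : Continuous f2
  K0 : 0 ≤ K
  A0 : 0 ≤ A
  g0 : ∀ x, |f x| ≤ A * (1 + |x| ^ 3)
  g1 : ∀ x, |f1 x| ≤ A * (1 + |x| ^ 2)
  g2 : ∀ x, |f2 x| ≤ A * (1 + |x| ^ 1)
  tay : ∀ x y, |f (x + y) - f x - f1 x * y - f2 x * y ^ 2 / 2| ≤ K * |y| ^ 3

lemma gsm_tay {f f1 f2 : ℝ → ℝ} {K A : ℝ} (h : TayData f f1 f2 K A) (t x y : ℝ) :
    |gsm f t (x + y) - gsm f t x - gsm f1 t x * y - gsm f2 t x * y ^ 2 / 2| ≤ K * |y| ^ 3 := by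
  have i0 := gsm_integrable h.c0 h.A0 h.g0 (x + y) √t
  have i1 := gsm_integrable h.c0 h.A0 h.g0 x √t
  have i2 := (gsm_integrable h.c1 h.A0 h.g1 x √t).mul_const y
  have i3 := (gsm_integrable h.c2 h.A0 h.g2 x √t).mul_const (y ^ 2 / 2)
  have e : gsm f t (x + y) - gsm f t x - gsm f1 t x * y - gsm f2 t x * y ^ 2 / 2 =
      ∫ z, (f (x + y + √t * z) - f (x + √t * z) - f1 (x + √t * z) * y
        - f2 (x + √t * z) * (y ^ 2 / 2)) ∂(gaussianReal 0 1) := by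
    rw [integral_sub4 i0 i1 i2 i3, integral_mul_const, integral_mul_const]
    unfold gsm
    ring
  rw [e]
  have := norm_integral_le_of_norm_le_const (μ := gaussianReal 0 1) (C := K * |y| ^ 3)
    (f := fun z => (f (x + y + √t * z) - f (x + √t * z) - f1 (x + √t * z) * y
        - f2 (x + √t * z) * (y ^ 2 / 2))) (Eventually.of_forall fun z => by
      have := h.tay (x + √t * z) y
      rw [show x + √t * z + y = x + y + √t * z by ring, mul_div_assoc] at this
      exact this)
  simpa using this

/-- third absolute moment of the normal law -/
def kap : ℝ := ∫ z, |z| ^ 3 ∂(gaussianReal 0 1)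

lemma kap_nonneg : 0 ≤ kap := integral_nonneg fun z => by positivity

lemma gauss_sq : ∫ z, z ^ 2 ∂(gaussianReal 0 1) = 1 := by
  have h := variance_id_gaussianReal (μ := 0) (v := 1)
  rw [variance_of_integral_eq_zero (by fun_prop) (by simp)] at h
  simpa using h

lemma gsm_step {f f1 f2 : ℝ → ℝ} {K A : ℝ} (h : TayData f f1 f2 K A) {t b : ℝ} (ht : 0 ≤ t)
    (hb : 0 ≤ b) (x : ℝ) :
    |gsm f (t + b) x - gsm f t x - gsm f2 t x * b / 2| ≤ K * kap * √b ^ 3 := by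
  rw [gsm_add h.c0 h.A0 h.g0 ht hb]
  have i0 : Integrable (fun z => gsm f t (x + √b * z)) (gaussianReal 0 1) := by
    obtain ⟨B, hB0, hB⟩ := gsm_growth h.c0 h.A0 h.g0 (√t) (Real.sqrt_nonneg _)
    refine Integrable.mono' (g := fun z => B * (1 + 2 ^ 3 * (|x| ^ 3 + |√b| ^ 3 * |z| ^ 3))) ?_ ?_ ?_
    · exact bd_int _ _ _ _
    · exact ((gsm_meas h.c0).comp (f := fun z => (t, x + √b * z)) (by fun_prop)).aestronglyMeasurable
    · exact Eventually.of_forall fun z =>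
        growth_bd (f := gsm f t) hB0 (fun x => hB t x (by rw [Real.sq_sqrt ht])) x _ z
  have iz : Integrable (fun z : ℝ => z) (gaussianReal 0 1) := by
    have := (memLp_id_gaussianReal' (μ := 0) (v := 1) 1 (by simp)).integrable le_rfl
    exact this
  have iz2 : Integrable (fun z : ℝ => z ^ 2) (gaussianReal 0 1) := by
    simpa using gauss_int_pow 2
  have i2 := iz.const_mul (gsm f1 t x * √b)
  have i3 := iz2.const_mul (gsm f2 t x * b / 2)
  have e : ∫ z, gsm f t (x + √b * z) ∂(gaussianReal 0 1) - gsm f t x - gsm f2 t x * b / 2 =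
      ∫ z, (gsm f t (x + √b * z) - gsm f t x - gsm f1 t x * √b * z - gsm f2 t x * b / 2 * z ^ 2)
        ∂(gaussianReal 0 1) := by
    rw [integral_sub4 i0 (integrable_const _) i2 i3, integral_const_mul, integral_const_mul, gauss_sq]
    simp
  rw [e]
  have i4 := (gauss_int_pow 3).const_mul (K * √b ^ 3)
  have := norm_integral_le_of_norm_le (f := fun z => gsm f t (x + √b * z) - gsm f t x
    - gsm f1 t x * √b * z - gsm f2 t x * b / 2 * z ^ 2) i4 (Eventually.of_forall fun z => by
      have := gsm_tay h t x (√b * z)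
      rw [mul_pow, Real.sq_sqrt hb, abs_mul, abs_of_nonneg (Real.sqrt_nonneg b)] at this
      rw [Real.norm_eq_abs]
      refine le_trans (le_of_eq ?_) (this.trans (le_of_eq ?_))
      · congr 1; ring
      · ring)
  rw [integral_const_mul] at this
  rw [show K * kap * √b ^ 3 = K * √b ^ 3 * kap by ring]
  exact this

lemma gsm_master {f f1 f2 : ℝ → ℝ} {K A : ℝ} (h : TayData f f1 f2 K A) {t b : ℝ} (ht : 0 ≤ t)
    (hb : 0 ≤ b) (x y : ℝ) :
    |gsm f t (x + y) - gsm f (t + b) x - (gsm f1 t x * y + gsm f2 t x / 2 * (y ^ 2 - b))| ≤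
      K * |y| ^ 3 + K * kap * √b ^ 3 := by
  have h1 := abs_le.1 (gsm_tay h t x y)
  have h2 := abs_le.1 (gsm_step h ht hb x)
  rw [abs_le]
  constructor <;> linarith [h1.1, h1.2, h2.1, h2.2]

lemma pull_zero {Ω : Type*} {m0 : MeasurableSpace Ω} {μ : Measure Ω} [IsProbabilityMeasure μ]
    {G : MeasurableSpace Ω} (hG : G ≤ m0) {p q : Ω → ℝ} (hp : Measurable[G] p)
    (hpq : Integrable (fun ω => p ω * q ω) μ) (hq : Integrable q μ) (h0 : μ[q | G] =ᵐ[μ] 0) :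
    ∫ ω, p ω * q ω ∂μ = 0 := by
  have h1 : μ[p * q | G] =ᵐ[μ] p * μ[q | G] :=
    condExp_mul_of_stronglyMeasurable_left hp.stronglyMeasurable hpq hq
  have h2 : ∫ ω, (μ[p * q | G]) ω ∂μ = ∫ ω, (p * q) ω ∂μ := integral_condExp hG
  have h3 : ∫ ω, (μ[p * q | G]) ω ∂μ = 0 := by
    rw [integral_congr_ae (g := fun _ => (0:ℝ))]
    · simp
    · filter_upwards [h1, h0] with ω a b
      rw [a]; simp [b]
  rw [h3] at h2
  exact h2.symm

lemma step_bound {Ω : Type*} {m0 : MeasurableSpace Ω} {μ : Measure Ω} [IsProbabilityMeasure μ]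
    {G : MeasurableSpace Ω} (hG : G ≤ m0) {S T y v : Ω → ℝ} {s : ℝ} (hs : 0 ≤ s)
    (hS : Measurable[G] S) (hT : Measurable[G] T) (hS3 : MemLp S 3 μ) (hy3 : MemLp y 3 μ)
    (hy0 : μ[y | G] =ᵐ[μ] 0) (hv : v = μ[fun ω => y ω ^ 2 | G])
    (hT0 : ∀ᵐ ω ∂μ, 0 ≤ T ω) (hTv : ∀ᵐ ω ∂μ, T ω + v ω ≤ s ^ 2)
    {f f1 f2 : ℝ → ℝ} {K A : ℝ} (h : TayData f f1 f2 K A) :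
    |(∫ ω, gsm f (T ω) (S ω + y ω) ∂μ) - ∫ ω, gsm f (T ω + v ω) (S ω) ∂μ| ≤
      K * (1 + kap) * ∫ ω, |y ω| ^ 3 ∂μ := by
  have hSm : Measurable[m0] S := hS.mono hG le_rfl
  have hTm : Measurable[m0] T := hT.mono hG le_rfl
  have hvG : Measurable[G] v := by rw [hv]; exact stronglyMeasurable_condExp.measurable
  have hvm : Measurable[m0] v := hvG.mono hG le_rfl
  have hym : AEMeasurable y μ := hy3.1.aemeasurable
  have hv0 : ∀ᵐ ω ∂μ, 0 ≤ v ω := by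
    rw [hv]
    exact condExp_nonneg (Eventually.of_forall fun ω => sq_nonneg (y ω))
  have iS : Integrable (fun ω => |S ω| ^ 3) μ := hS3.integrable_norm_pow' (p := 3)
  have iy : Integrable (fun ω => |y ω| ^ 3) μ := hy3.integrable_norm_pow' (p := 3)
  have iSy : Integrable (fun ω => |S ω + y ω| ^ 3) μ := (hS3.add hy3).integrable_norm_pow' (p := 3)
  have iy1 : Integrable y μ := hy3.integrable (by norm_num)
  have iy2 : Integrable (fun ω => y ω ^ 2) μ :=
    (hy3.mono_exponent (by norm_num : (2:ℝ≥0∞) ≤ 3)).integrable_sq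
  have iv : Integrable v μ := by rw [hv]; exact integrable_condExp
  have iq : Integrable (fun ω => y ω ^ 2 - v ω) μ := iy2.sub iv
  have hq0 : μ[fun ω => y ω ^ 2 - v ω | G] =ᵐ[μ] 0 := by
    have h1 : μ[(fun ω => y ω ^ 2) - v | G] =ᵐ[μ] μ[fun ω => y ω ^ 2 | G] - μ[v | G] :=
      condExp_sub iy2 iv G
    have h2 : μ[v | G] = v := condExp_of_stronglyMeasurable hG hvG.stronglyMeasurable iv
    rw [h2, ← hv, sub_self] at h1
    exact h1
  -- third moment of the conditional standard deviation
  have hvs : ∀ᵐ ω ∂μ, v ω ≤ s ^ 2 := by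
    filter_upwards [hT0, hTv] with ω a b
    linarith
  have hsv : ∀ᵐ ω ∂μ, √(v ω) ≤ s := by
    filter_upwards [hvs] with ω a
    exact (Real.sqrt_le_sqrt a).trans (by rw [Real.sqrt_sq hs])
  have iv3 : Integrable (fun ω => √(v ω) ^ 3) μ := by
    refine Integrable.mono' (integrable_const (s ^ 3)) (by fun_prop) ?_
    filter_upwards [hsv] with ω a
    rw [Real.norm_eq_abs, abs_of_nonneg (by positivity)]
    gcongr
  have isq : Integrable (fun ω => √(v ω) * (y ω ^ 2 - v ω)) μ := by
    refine Integrable.mono' ((iq.abs).const_mul s) (by fun_prop) ?_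
    filter_upwards [hsv] with ω a
    rw [Real.norm_eq_abs, abs_mul, abs_of_nonneg (Real.sqrt_nonneg _)]
    gcongr
  have hjen : ∫ ω, √(v ω) ^ 3 ∂μ ≤ ∫ ω, |y ω| ^ 3 ∂μ := by
    have e0 := pull_zero hG hvG.sqrt isq iq hq0
    have e1 : ∫ ω, √(v ω) * (y ω ^ 2 - v ω) ∂μ ≤
        ∫ ω, (2 / 3 * |y ω| ^ 3 - 2 / 3 * √(v ω) ^ 3) ∂μ := by
      refine integral_mono_ae isq ((iy.const_mul _).sub (iv3.const_mul _)) ?_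
      filter_upwards [hv0] with ω a
      have h1 : v ω = √(v ω) ^ 2 := (Real.sq_sqrt a).symm
      have h2 := Real.sqrt_nonneg (v ω)
      have h3 := abs_nonneg (y ω)
      rw [← sq_abs (y ω)]
      generalize √(v ω) = r at *
      generalize |y ω| = w at *
      simp only [h1]
      nlinarith [mul_nonneg (add_nonneg h2 (add_nonneg h3 h3)) (sq_nonneg (r - w))]
    rw [e0, integral_sub (iy.const_mul _) (iv3.const_mul _), integral_const_mul,
      integral_const_mul] at e1
    linarith
  -- growth bounds
  obtain ⟨B0, hB0, b0⟩ := gsm_growth h.c0 h.A0 h.g0 s hs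
  obtain ⟨B1, hB1, b1⟩ := gsm_growth h.c1 h.A0 h.g1 s hs
  obtain ⟨B2, hB2, b2⟩ := gsm_growth h.c2 h.A0 h.g2 s hs
  have hTs : ∀ᵐ ω ∂μ, T ω ≤ s ^ 2 := by
    filter_upwards [hv0, hTv] with ω a b
    linarith
  have m1 : Measurable[G] (fun ω => gsm f1 (T ω) (S ω)) := (gsm_meas h.c1).comp (hT.prodMk hS)
  have m2 : Measurable[G] (fun ω => gsm f2 (T ω) (S ω) / 2) :=
    ((gsm_meas h.c2).comp (hT.prodMk hS)).div_const 2
  have m1' : Measurable[m0] (fun ω => gsm f1 (T ω) (S ω)) := m1.mono hG le_rfl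
  have m2' : Measurable[m0] (fun ω => gsm f2 (T ω) (S ω) / 2) := m2.mono hG le_rfl
  have iA : Integrable (fun ω => gsm f (T ω) (S ω + y ω)) μ := by
    refine Integrable.mono' (((integrable_const 1).add iSy).const_mul B0) ?_ ?_
    · exact ((gsm_meas h.c0).comp_aemeasurable
        (hTm.aemeasurable.prodMk (hSm.aemeasurable.add hym))).aestronglyMeasurable
    · filter_upwards [hTs] with ω a
      exact b0 _ _ a
  have iB : Integrable (fun ω => gsm f (T ω + v ω) (S ω)) μ := by
    refine Integrable.mono' (((integrable_const 1).add iS).const_mul B0) ?_ ?_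
    · exact ((gsm_meas h.c0).comp ((hTm.add hvm).prodMk hSm)).aestronglyMeasurable
    · filter_upwards [hTv] with ω a
      exact b0 _ _ a
  have i1 : Integrable (fun ω => gsm f1 (T ω) (S ω) * y ω) μ := by
    refine Integrable.mono' ((((integrable_const 1).add iS).add (iy.const_mul 2)).const_mul B1)
      (m1'.aestronglyMeasurable.mul hy3.1) ?_
    filter_upwards [hTs] with ω a
    rw [Real.norm_eq_abs, abs_mul]
    refine (mul_le_mul_of_nonneg_right (b1 _ _ a) (abs_nonneg _)).trans ?_
    rw [mul_assoc]
    refine mul_le_mul_of_nonneg_left ?_ hB1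
    simp only [Pi.add_apply]
    have p1 := abs_nonneg (S ω)
    have p2 := abs_nonneg (y ω)
    generalize |S ω| = c at *
    generalize |y ω| = w at *
    have q1 : w ≤ 1 + w ^ 3 := by nlinarith [mul_nonneg p2 (sq_nonneg (w - 1)), sq_nonneg (w - 1)]
    have q2 : c ^ 2 * w ≤ c ^ 3 + w ^ 3 := by
      rcases le_total c w with hh | hh
      · nlinarith [mul_nonneg p2 (mul_nonneg (sub_nonneg.2 hh) (add_nonneg p1 p2)), pow_nonneg p1 3]
      · nlinarith [mul_nonneg (sq_nonneg c) (sub_nonneg.2 hh), pow_nonneg p2 3]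
    nlinarith
  have i2 : Integrable (fun ω => gsm f2 (T ω) (S ω) / 2 * (y ω ^ 2 - v ω)) μ := by
    refine Integrable.mono' (g := fun ω => B2 * ((1 + |y ω| ^ 3) + (|S ω| ^ 3 + |y ω| ^ 3)
      + s ^ 2 + s ^ 2 * (1 + |S ω| ^ 3))) ?_
      (m2'.aestronglyMeasurable.mul iq.1) ?_
    · exact (((((integrable_const 1).add iy).add (iS.add iy)).add (integrable_const _)).add
        (((integrable_const 1).add iS).const_mul _)).const_mul _
    filter_upwards [hTs, hv0, hvs] with ω a a2 a3
    rw [Real.norm_eq_abs, abs_mul]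
    have r1 : |gsm f2 (T ω) (S ω) / 2| ≤ B2 * (1 + |S ω| ^ 1) := by
      rw [abs_div, abs_two]
      linarith [b2 _ (S ω) a, abs_nonneg (gsm f2 (T ω) (S ω))]
    have r2 : |y ω ^ 2 - v ω| ≤ |y ω| ^ 2 + s ^ 2 := by
      rw [sq_abs, abs_le]
      constructor <;> nlinarith [sq_nonneg (y ω)]
    refine (mul_le_mul r1 r2 (abs_nonneg _) (by positivity)).trans ?_
    rw [mul_assoc]
    refine mul_le_mul_of_nonneg_left ?_ hB2
    have p1 := abs_nonneg (S ω)
    have p2 := abs_nonneg (y ω)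
    generalize |S ω| = c at *
    generalize |y ω| = w at *
    have q1 : w ^ 2 ≤ 1 + w ^ 3 := by nlinarith [mul_nonneg p2 (sq_nonneg (w - 1)), sq_nonneg (w - 1)]
    have q2 : c * w ^ 2 ≤ c ^ 3 + w ^ 3 := by
      rcases le_total c w with hh | hh
      · nlinarith [mul_nonneg (sq_nonneg w) (sub_nonneg.2 hh), pow_nonneg p1 3]
      · nlinarith [mul_nonneg p1 (mul_nonneg (sub_nonneg.2 hh) (add_nonneg p1 p2)), pow_nonneg p2 3]
    have q3 : c ≤ 1 + c ^ 3 := by nlinarith [mul_nonneg p1 (sq_nonneg (c - 1)), sq_nonneg (c - 1)]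
    have q4 := mul_le_mul_of_nonneg_left q3 (sq_nonneg s)
    nlinarith
  have z1 := pull_zero hG m1 i1 iy1 hy0
  have z2 := pull_zero hG m2 i2 iq hq0
  have iAB : Integrable (fun ω => gsm f (T ω) (S ω + y ω) - gsm f (T ω + v ω) (S ω)) μ := iA.sub iB
  have i12 : Integrable (fun ω => gsm f1 (T ω) (S ω) * y ω
    + gsm f2 (T ω) (S ω) / 2 * (y ω ^ 2 - v ω)) μ := i1.add i2
  have e : (∫ ω, gsm f (T ω) (S ω + y ω) ∂μ) - ∫ ω, gsm f (T ω + v ω) (S ω) ∂μ =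
      ∫ ω, (gsm f (T ω) (S ω + y ω) - gsm f (T ω + v ω) (S ω) - (gsm f1 (T ω) (S ω) * y ω
        + gsm f2 (T ω) (S ω) / 2 * (y ω ^ 2 - v ω))) ∂μ := by
    rw [integral_sub iAB i12, integral_add i1 i2, integral_sub iA iB, z1, z2]
    ring
  rw [e]
  have iR := (iy.const_mul K).add (iv3.const_mul (K * kap))
  have hfin := norm_integral_le_of_norm_le (f := fun ω => gsm f (T ω) (S ω + y ω)
      - gsm f (T ω + v ω) (S ω) - (gsm f1 (T ω) (S ω) * y ω
        + gsm f2 (T ω) (S ω) / 2 * (y ω ^ 2 - v ω))) iR (by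
    filter_upwards [hT0, hv0] with ω a b
    exact gsm_master h a b (S ω) (y ω))
  have e2 : ∫ ω, ((fun x => K * |y x| ^ 3) + fun x => K * kap * √(v x) ^ 3) ω ∂μ =
      K * ∫ ω, |y ω| ^ 3 ∂μ + K * kap * ∫ ω, √(v ω) ^ 3 ∂μ := by
    rw [integral_add' (iy.const_mul K) (iv3.const_mul (K * kap)), integral_const_mul,
      integral_const_mul]
  rw [e2, Real.norm_eq_abs] at hfin
  refine hfin.trans ?_
  have := mul_le_mul_of_nonneg_left hjen (mul_nonneg h.K0 kap_nonneg)
  linarith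

lemma core_bound {Ω : Type*} {m0 : MeasurableSpace Ω} {μ : Measure Ω} [IsProbabilityMeasure μ]
    {F : ℕ → MeasurableSpace Ω} {n : ℕ} {Y : ℕ → Ω → ℝ} {s : ℝ} (hY : IsMDS μ F n Y) (hs : 0 < s)
    (hsum : (fun ω => ∑ i ∈ Finset.Icc 1 n, (μ[fun ω' => (Y i ω') ^ 2 | F (i - 1)]) ω)
          =ᵐ[μ] (fun _ => s ^ 2))
    (h3 : ∀ i, 1 ≤ i → i ≤ n → MemLp (Y i) 3 μ)
    {f f1 f2 : ℝ → ℝ} {K A : ℝ} (h : TayData f f1 f2 K A) :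
    |(∫ ω, f (∑ i ∈ Finset.Icc 1 n, Y i ω) ∂μ) - ∫ z, f (s * z) ∂(gaussianReal 0 1)| ≤
      K * (1 + kap) * ∑ i ∈ Finset.Icc 1 n, ∫ ω, |Y i ω| ^ 3 ∂μ := by
  set v : ℕ → Ω → ℝ := fun i => μ[fun ω' => (Y i ω') ^ 2 | F (i - 1)] with hv
  have hv0 : ∀ᵐ ω ∂μ, ∀ i, 0 ≤ v i ω := by
    rw [ae_all_iff]
    intro i
    exact condExp_nonneg (Eventually.of_forall fun ω => sq_nonneg (Y i ω))
  have hvm : ∀ i, Measurable[F (i - 1)] (v i) := fun i => stronglyMeasurable_condExp.measurable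
  have key : ∀ m, m ≤ n →
      |(∫ ω, gsm f (s ^ 2 - ∑ i ∈ Finset.Icc 1 m, v i ω) (∑ i ∈ Finset.Icc 1 m, Y i ω) ∂μ)
        - gsm f (s ^ 2) 0| ≤ K * (1 + kap) * ∑ i ∈ Finset.Icc 1 m, ∫ ω, |Y i ω| ^ 3 ∂μ := by
    intro m
    induction m with
    | zero => intro _; simp
    | succ m ih =>
      intro hm
      have ih := ih (by omega)
      have st := step_bound (μ := μ) (hY.le m) (S := fun ω => ∑ i ∈ Finset.Icc 1 m, Y i ω)
        (T := fun ω => s ^ 2 - ∑ i ∈ Finset.Icc 1 (m + 1), v i ω) (y := Y (m + 1))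
        (v := v (m + 1)) (s := s) hs.le
        (by
          refine Finset.measurable_fun_sum _ fun i hi => ?_
          rw [Finset.mem_Icc] at hi
          exact (hY.adapted i hi.1 (by omega)).mono (hY.mono hi.2) le_rfl)
        (by
          refine Measurable.const_sub ?_ _
          refine Finset.measurable_fun_sum _ fun i hi => ?_
          rw [Finset.mem_Icc] at hi
          exact (hvm i).mono (hY.mono (by omega)) le_rfl)
        (by
          refine memLp_finsetSum _ fun i hi => ?_
          rw [Finset.mem_Icc] at hi
          exact h3 i hi.1 (by omega))
        (h3 _ (by omega) hm) (hY.mdiff (m + 1) (by omega) hm) rfl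
        (by
          filter_upwards [hsum, hv0] with ω a b
          have := Finset.sum_le_sum_of_subset_of_nonneg (f := fun i => v i ω)
            (Finset.Icc_subset_Icc_right hm : Finset.Icc 1 (m + 1) ⊆ Finset.Icc 1 n)
            (fun i _ _ => b i)
          have a' : ∑ i ∈ Finset.Icc 1 n, v i ω = s ^ 2 := a
          linarith)
        (by
          filter_upwards [hv0] with ω b
          rw [Finset.sum_Icc_succ_top (by omega)]
          have := Finset.sum_nonneg (s := Finset.Icc 1 m) fun i _ => b i
          linarith)
        h
      have e1 : ∀ ω, s ^ 2 - ∑ i ∈ Finset.Icc 1 (m + 1), v i ω + v (m + 1) ω =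
          s ^ 2 - ∑ i ∈ Finset.Icc 1 m, v i ω := by
        intro ω
        rw [Finset.sum_Icc_succ_top (by omega)]
        ring
      have e2 : ∀ ω, ∑ i ∈ Finset.Icc 1 m, Y i ω + Y (m + 1) ω
          = ∑ i ∈ Finset.Icc 1 (m + 1), Y i ω := by
        intro ω
        rw [Finset.sum_Icc_succ_top (by omega)]
      simp only [e1, e2] at st
      rw [Finset.sum_Icc_succ_top (by omega) (fun i => ∫ ω, |Y i ω| ^ 3 ∂μ), mul_add]
      rw [abs_le] at *
      constructor <;> linarith [st.1, st.2, ih.1, ih.2]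
  have hk := key n le_rfl
  have e1 : ∫ ω, gsm f (s ^ 2 - ∑ i ∈ Finset.Icc 1 n, v i ω) (∑ i ∈ Finset.Icc 1 n, Y i ω) ∂μ =
      ∫ ω, f (∑ i ∈ Finset.Icc 1 n, Y i ω) ∂μ := by
    refine integral_congr_ae ?_
    filter_upwards [hsum] with ω a
    have a' : ∑ i ∈ Finset.Icc 1 n, v i ω = s ^ 2 := a
    rw [a']
    simp [gsm]
  have e2 : gsm f (s ^ 2) 0 = ∫ z, f (s * z) ∂(gaussianReal 0 1) := by
    simp [gsm, Real.sqrt_sq hs.le]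
  rw [e1, e2] at hk
  exact hk

lemma mds_L3 {Ω : Type*} {m0 : MeasurableSpace Ω} {μ : Measure Ω} [IsProbabilityMeasure μ]
    {F : ℕ → MeasurableSpace Ω} {n : ℕ} {Y : ℕ → Ω → ℝ} (hY : IsMDS μ F n Y)
    (hS : MemLp (fun ω => ∑ i ∈ Finset.Icc 1 n, Y i ω) 3 μ) :
    ∀ i, 1 ≤ i → i ≤ n → MemLp (Y i) 3 μ := by
  have hint : ∀ i, 1 ≤ i → i ≤ n → Integrable (Y i) μ := fun i h1 h2 =>
    (hY.memL2 i h1 h2).integrable (by norm_num)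
  have down : ∀ m, m + 1 ≤ n → MemLp (fun ω => ∑ i ∈ Finset.Icc 1 (m + 1), Y i ω) 3 μ →
      MemLp (fun ω => ∑ i ∈ Finset.Icc 1 m, Y i ω) 3 μ := by
    intro m hm hL
    have hmeas : Measurable[F m] (fun ω => ∑ i ∈ Finset.Icc 1 m, Y i ω) := by
      refine Finset.measurable_fun_sum _ fun i hi => ?_
      rw [Finset.mem_Icc] at hi
      exact (hY.adapted i hi.1 (by omega)).mono (hY.mono hi.2) le_rfl
    have hi : Integrable (fun ω => ∑ i ∈ Finset.Icc 1 m, Y i ω) μ := by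
      refine integrable_finsetSum _ fun i hi => ?_
      rw [Finset.mem_Icc] at hi
      exact hint i hi.1 (by omega)
    have hc := hL.condExp (m := F m) (by norm_num)
    refine hc.ae_eq ?_
    have e : (fun ω => ∑ i ∈ Finset.Icc 1 (m + 1), Y i ω) =
        (fun ω => ∑ i ∈ Finset.Icc 1 m, Y i ω) + Y (m + 1) := by
      ext ω
      rw [Finset.sum_Icc_succ_top (by omega)]
      rfl
    rw [e]
    have h1 := condExp_add hi (hint (m + 1) (by omega) hm) (F m)
    rw [condExp_of_stronglyMeasurable (hY.le m) hmeas.stronglyMeasurable hi] at h1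
    have h2 : μ[Y (m + 1) | F m] =ᵐ[μ] 0 := hY.mdiff (m + 1) (by omega) hm
    filter_upwards [h1, h2] with ω a b
    rw [a]
    simp [b]
  have all : ∀ k, k ≤ n → MemLp (fun ω => ∑ i ∈ Finset.Icc 1 (n - k), Y i ω) 3 μ := by
    intro k
    induction k with
    | zero => intro _; exact hS
    | succ k ih =>
      intro hk
      have := ih (by omega)
      rw [show n - k = n - (k + 1) + 1 by omega] at this
      exact down _ (by omega) this
  intro i h1 h2
  obtain ⟨m, rfl⟩ : ∃ m, i = m + 1 := ⟨i - 1, by omega⟩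
  have a1 := all (n - (m + 1)) (by omega)
  have a2 := all (n - m) (by omega)
  rw [show n - (n - (m + 1)) = m + 1 by omega] at a1
  rw [show n - (n - m) = m by omega] at a2
  have e : Y (m + 1) = (fun ω => ∑ i ∈ Finset.Icc 1 (m + 1), Y i ω) -
      (fun ω => ∑ i ∈ Finset.Icc 1 m, Y i ω) := by
    ext ω
    simp only [Pi.sub_apply]
    rw [Finset.sum_Icc_succ_top (by omega)]
    ring
  rw [e]
  exact a1.sub a2

lemma mvt_bd {g g' : ℝ → ℝ} (hg : ∀ x, HasDerivAt g (g' x) x) {y C : ℝ}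
    (hb : ∀ x, |x| ≤ |y| → |g' x| ≤ C) : |g y - g 0| ≤ C * |y| := by
  have := Convex.norm_image_sub_le_of_norm_hasDerivWithin_le (f := g) (f' := g')
    (s := Set.Icc (-|y|) |y|) (x := 0) (y := y) (C := C) (fun x _ => (hg x).hasDerivWithinAt)
    (fun x hx => hb x (abs_le.2 hx)) (convex_Icc _ _) (by simp)
    ⟨neg_abs_le y, le_abs_self y⟩
  simpa using this

lemma mkTay {f f1 f2 : ℝ → ℝ} {L : ℝ} (hL : 0 ≤ L) (h1 : ∀ x, HasDerivAt f (f1 x) x)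
    (h2 : ∀ x, HasDerivAt f1 (f2 x) x) (hc : Continuous f2)
    (hl : ∀ x y, |f2 (x + y) - f2 x| ≤ L * |y|) : ∃ A, TayData f f1 f2 L A := by
  have b1 : ∀ x y, |f1 (x + y) - f1 x - f2 x * y| ≤ L * |y| ^ 2 := by
    intro x y
    have := mvt_bd (g := fun y => f1 (x + y) - f1 x - f2 x * y) (g' := fun y => f2 (x + y) - f2 x)
      (y := y) (C := L * |y|) (fun z => by
        have a := (h2 (x + z)).comp_const_add x z
        have b := (a.sub_const (f1 x)).sub ((hasDerivAt_id z).const_mul (f2 x))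
        refine HasDerivAt.congr_deriv b ?_
        simp)
      (fun z hz => (hl x z).trans (by gcongr))
    simp only [add_zero, sub_self, mul_zero, sub_zero] at this
    calc _ ≤ _ := this
      _ = _ := by ring
  have b0 : ∀ x y, |f (x + y) - f x - f1 x * y - f2 x * y ^ 2 / 2| ≤ L * |y| ^ 3 := by
    intro x y
    have := mvt_bd (g := fun y => f (x + y) - f x - f1 x * y - f2 x * y ^ 2 / 2)
      (g' := fun y => f1 (x + y) - f1 x - f2 x * y)
      (y := y) (C := L * |y| ^ 2) (fun z => by
        have a := (h1 (x + z)).comp_const_add x z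
        have b := ((a.sub_const (f x)).sub ((hasDerivAt_id z).const_mul (f1 x))).sub
          (((hasDerivAt_pow 2 z).const_mul (f2 x)).div_const 2)
        refine HasDerivAt.congr_deriv b ?_
        simp; ring)
      (fun z hz => (b1 x z).trans (by gcongr))
    simp only [add_zero, sub_self, mul_zero] at this
    calc _ = _ := by simp
      _ ≤ _ := this
      _ = _ := by ring
  refine ⟨|f 0| + 2 * |f1 0| + 2 * |f2 0| + L, ?_⟩
  have cf1 : Continuous f1 := continuous_iff_continuousAt.2 fun x => (h2 x).continuousAt
  have cf : Continuous f := continuous_iff_continuousAt.2 fun x => (h1 x).continuousAt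
  have t0 := abs_nonneg (f 0)
  have t1 := abs_nonneg (f1 0)
  have t2 := abs_nonneg (f2 0)
  refine ⟨cf, cf1, hc, hL, by positivity, fun x => ?_, fun x => ?_, fun x => ?_, b0⟩
  · have a := b0 0 x
    rw [zero_add] at a
    have a1 : |f x| ≤ |f 0| + |f1 0| * |x| + |f2 0| * |x| ^ 2 / 2 + L * |x| ^ 3 := by
      have e1 : |f1 0| * |x| = |f1 0 * x| := (abs_mul _ _).symm
      have e2 : |f2 0| * |x| ^ 2 / 2 = |f2 0 * x ^ 2 / 2| := by simp [abs_mul, abs_div]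
      rw [e1, e2]
      have e : f x = (f x - f 0 - f1 0 * x - f2 0 * x ^ 2 / 2) + f 0 + f1 0 * x + f2 0 * x ^ 2 / 2 := by
        ring
      have r1 := abs_add_le ((f x - f 0 - f1 0 * x - f2 0 * x ^ 2 / 2) + f 0 + f1 0 * x) (f2 0 * x ^ 2 / 2)
      have r2 := abs_add_le ((f x - f 0 - f1 0 * x - f2 0 * x ^ 2 / 2) + f 0) (f1 0 * x)
      have r3 := abs_add_le (f x - f 0 - f1 0 * x - f2 0 * x ^ 2 / 2) (f 0)
      rw [← e] at r1
      linarith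
    have p := abs_nonneg x
    generalize |x| = w at *
    have q1 : w ≤ 1 + w ^ 3 := by nlinarith [mul_nonneg p (sq_nonneg (w - 1)), sq_nonneg (w - 1)]
    have q2 : w ^ 2 ≤ 1 + w ^ 3 := by nlinarith [mul_nonneg p (sq_nonneg (w - 1)), sq_nonneg (w - 1)]
    have q3 : 0 ≤ w ^ 3 := by positivity
    nlinarith [mul_le_mul_of_nonneg_left q1 t1, mul_le_mul_of_nonneg_left q2 t2,
      mul_nonneg t0 q3, mul_nonneg t1 q3, mul_nonneg t2 q3]
  · have a := b1 0 x
    rw [zero_add] at a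
    have a1 : |f1 x| ≤ |f1 0| + |f2 0| * |x| + L * |x| ^ 2 := by
      rw [← abs_mul (f2 0)]
      have e : f1 x = (f1 x - f1 0 - f2 0 * x) + f1 0 + f2 0 * x := by ring
      have r2 := abs_add_le ((f1 x - f1 0 - f2 0 * x) + f1 0) (f2 0 * x)
      have r3 := abs_add_le (f1 x - f1 0 - f2 0 * x) (f1 0)
      rw [← e] at r2
      linarith
    have p := abs_nonneg x
    generalize |x| = w at *
    have q1 : w ≤ 1 + w ^ 2 := by nlinarith [sq_nonneg (w - 1)]
    have q3 : 0 ≤ w ^ 2 := by positivity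
    nlinarith [mul_le_mul_of_nonneg_left q1 t2, mul_nonneg t0 q3, mul_nonneg t1 q3, mul_nonneg t2 q3]
  · have a := hl 0 x
    rw [zero_add] at a
    have a1 : |f2 x| ≤ |f2 0| + L * |x| := by
      have e : f2 x = (f2 x - f2 0) + f2 0 := by ring
      have r3 := abs_add_le (f2 x - f2 0) (f2 0)
      rw [← e] at r3
      linarith
    have p := abs_nonneg x
    generalize |x| = w at *
    nlinarith [mul_nonneg t0 p, mul_nonneg t1 p, mul_nonneg t2 p]

lemma sign_mul_abs' (y : ℝ) : |y| * (SignType.sign y : ℝ) = y := by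
  rw [mul_comm]; exact sign_mul_abs y

lemma abs_cube_deriv (c x : ℝ) : HasDerivAt (fun x : ℝ => |x| ^ 3 / 6 - c) (x * |x| / 2) x := by
  have k : ∀ y : ℝ, y ≠ 0 → HasDerivAt (fun x : ℝ => |x| ^ 3 / 6 - c) (y * |y| / 2) y := fun y hy => by
    have a := (((hasDerivAt_abs hy).pow 3).div_const 6).sub_const c
    refine HasDerivAt.congr_deriv a ?_
    have e := sign_mul_abs' y
    norm_num
    linear_combination (|y| / 2) * e - (SignType.sign y : ℝ) / 2 * sq_abs y
  rcases eq_or_ne x 0 with rfl | hy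
  · exact hasDerivAt_of_hasDerivAt_of_ne (f := fun x : ℝ => |x| ^ 3 / 6 - c)
      (g := fun x => x * |x| / 2) (x := 0) k (by fun_prop) (by fun_prop)
  · exact k x hy

lemma mul_abs_deriv (x : ℝ) : HasDerivAt (fun x : ℝ => x * |x| / 2) |x| x := by
  have k : ∀ y : ℝ, y ≠ 0 → HasDerivAt (fun x : ℝ => x * |x| / 2) |y| y := fun y hy => by
    have a := ((hasDerivAt_id y).mul (hasDerivAt_abs hy)).div_const 2
    refine HasDerivAt.congr_deriv a ?_
    have e := self_mul_sign y
    simp only [id, one_mul]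
    linear_combination e / 2
  rcases eq_or_ne x 0 with rfl | hy
  · exact hasDerivAt_of_hasDerivAt_of_ne (f := fun x : ℝ => x * |x| / 2) (g := fun x => |x|) (x := 0)
      k (by fun_prop) (by fun_prop)
  · exact k x hy

lemma zol_unbdd {Ω : Type*} {m0 : MeasurableSpace Ω} {μ : Measure Ω} [IsProbabilityMeasure μ]
    {U : Ω → ℝ} (hU : AEStronglyMeasurable U μ) (h : ¬ MemLp U 3 μ) :
    zolotarev 3 μ U stdGaussian = 0 := by
  unfold zolotarev
  refine Real.sSup_of_not_bddAbove ?_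
  rintro ⟨M, hM⟩
  set c : ℝ := M + kap / 6 + 1 with hc
  have hd : deriv (fun x : ℝ => |x| ^ 3 / 6 - c) = fun x => x * |x| / 2 :=
    funext fun x => (abs_cube_deriv c x).deriv
  have hd2 : deriv (fun x : ℝ => x * |x| / 2) = fun x => |x| := funext fun x => (mul_abs_deriv x).deriv
  have hi2 : iteratedDeriv 2 (fun x : ℝ => |x| ^ 3 / 6 - c) = fun x => |x| := by
    rw [iteratedDeriv_succ, iteratedDeriv_one, hd, hd2]
  have hnot : ¬ Integrable (fun ω => |U ω| ^ 3 / 6 - c) μ := by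
    intro hi
    apply h
    have h1 : Integrable (fun ω => |U ω| ^ 3) μ := by
      have := (hi.add (integrable_const c)).mul_const 6
      refine this.congr (Eventually.of_forall fun ω => ?_)
      simp
    have h2 := integrable_norm_rpow_iff hU (p := 3) (by norm_num) (by norm_num)
    refine h2.1 ?_
    simpa using h1
  have hmem := @hM (0 - ∫ x, (|x| ^ 3 / 6 - c) ∂stdGaussian) ⟨fun x => |x| ^ 3 / 6 - c, ?_, ?_, ?_⟩
  · have e : ∫ x, (|x| ^ 3 / 6 - c) ∂stdGaussian = kap / 6 - c := by
      unfold _root_.stdGaussian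
      rw [integral_sub ((gauss_int_pow 3).div_const 6) (integrable_const _), integral_div]
      simp [kap]
    rw [e] at hmem
    linarith
  · show ContDiff ℝ 2 _
    rw [show (2 : WithTop ℕ∞) = 1 + 1 by norm_num, contDiff_succ_iff_deriv, hd]
    refine ⟨fun x => (abs_cube_deriv c x).differentiableAt, by simp, ?_⟩
    rw [contDiff_one_iff_deriv, hd2]
    exact ⟨fun x => (mul_abs_deriv x).differentiableAt, continuous_abs⟩
  · show LipschitzWith 1 (iteratedDeriv 2 _)
    rw [hi2]
    refine LipschitzWith.of_dist_le_mul fun x y => ?_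
    simpa [Real.dist_eq] using abs_abs_sub_abs_le_abs_sub x y
  · rw [integral_undef hnot]

/-- Proposition 3.4, the `r = 3` bound: `Z₃(X_n, N) ≲ s_n⁻³ Σ E|Y_i|³` when
`Σ σ_i²(Y) = s_n²` a.s. -/
theorem zolotarev3_bound :
    ∃ C : ℝ, 0 < C ∧
      ∀ (Ω : Type) (m0 : MeasurableSpace Ω) (μ : Measure Ω), IsProbabilityMeasure μ →
      ∀ (F : ℕ → MeasurableSpace Ω) (n : ℕ) (Y : ℕ → Ω → ℝ) (sn : ℝ),
        2 ≤ n → IsMDS μ F n Y → 0 < sn →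
        sn ^ 2 = (∑ i ∈ Finset.Icc 1 n, ∫ ω, (Y i ω) ^ 2 ∂μ) →
        ((fun ω => ∑ i ∈ Finset.Icc 1 n, (μ[fun ω' => (Y i ω') ^ 2 | F (i - 1)]) ω)
          =ᵐ[μ] (fun _ => sn ^ 2)) →
        zolotarev 3 μ (fun ω => (∑ i ∈ Finset.Icc 1 n, Y i ω) / sn) stdGaussian ≤
          C * (sn ^ 3)⁻¹ * ∑ i ∈ Finset.Icc 1 n, ∫ ω, |Y i ω| ^ 3 ∂μ := by
  refine ⟨1 + kap, by linarith [kap_nonneg], ?_⟩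
  intro Ω m0 μ hμ F n Y s hn hY hs hs2 hsum
  have hnn : 0 ≤ (1 + kap) * (s ^ 3)⁻¹ * ∑ i ∈ Finset.Icc 1 n, ∫ ω, |Y i ω| ^ 3 ∂μ := by
    have := kap_nonneg
    have h2 : 0 ≤ ∑ i ∈ Finset.Icc 1 n, ∫ ω, |Y i ω| ^ 3 ∂μ :=
      Finset.sum_nonneg fun i _ => integral_nonneg fun ω => by positivity
    positivity
  have hSm : AEStronglyMeasurable (fun ω => ∑ i ∈ Finset.Icc 1 n, Y i ω) μ := by
    have : MemLp (fun ω => ∑ i ∈ Finset.Icc 1 n, Y i ω) 2 μ := by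
      refine memLp_finsetSum _ fun i hi => ?_
      rw [Finset.mem_Icc] at hi
      exact hY.memL2 i hi.1 hi.2
    exact this.1
  by_cases hL : MemLp (fun ω => ∑ i ∈ Finset.Icc 1 n, Y i ω) 3 μ
  swap
  · rw [zol_unbdd]
    · exact hnn
    · exact hSm.mul_const s⁻¹
    · intro hc
      apply hL
      have := hc.mul_const s
      refine this.ae_eq (Eventually.of_forall fun ω => ?_)
      simp [hs.ne']
  have h3 := mds_L3 hY hL
  refine Real.sSup_le ?_ hnn
  rintro d ⟨f, hf, hlip, rfl⟩
  have hf' : ContDiff ℝ 2 f := hf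
  have hlip' : LipschitzWith 1 (iteratedDeriv 2 f) := hlip
  have hi2 : iteratedDeriv 2 f = deriv (deriv f) := by
    rw [iteratedDeriv_succ, iteratedDeriv_one]
  rw [hi2] at hlip'
  have hf1 : ContDiff ℝ 1 (deriv f) := by
    rw [show (2 : WithTop ℕ∞) = 1 + 1 by norm_num, contDiff_succ_iff_deriv] at hf'
    exact hf'.2.2
  have d1 : ∀ x, HasDerivAt f (deriv f x) x := fun x =>
    (hf'.differentiable (by norm_num) x).hasDerivAt
  have d2 : ∀ x, HasDerivAt (deriv f) (deriv (deriv f) x) x := fun x =>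
    (hf1.differentiable (by norm_num) x).hasDerivAt
  obtain ⟨A, hT⟩ := mkTay (f := fun x => f (x / s)) (f1 := fun x => deriv f (x / s) / s)
    (f2 := fun x => deriv (deriv f) (x / s) / s / s) (L := (s ^ 3)⁻¹) (by positivity)
    (fun x => by
      have := (d1 (x / s)).comp x ((hasDerivAt_id x).div_const s)
      refine HasDerivAt.congr_deriv this ?_
      simp [div_eq_mul_inv])
    (fun x => by
      have := ((d2 (x / s)).comp x ((hasDerivAt_id x).div_const s)).div_const s
      refine HasDerivAt.congr_deriv this ?_
      simp [div_eq_mul_inv])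
    (by
      have := hlip'.continuous
      fun_prop)
    (fun x y => by
      have := hlip'.dist_le_mul ((x + y) / s) (x / s)
      rw [Real.dist_eq, Real.dist_eq, ← sub_div, add_sub_cancel_left, abs_div, abs_of_pos hs] at this
      simp only [NNReal.coe_one, one_mul] at this
      rw [← sub_div, ← sub_div, abs_div, abs_div, abs_of_pos hs]
      calc _ ≤ |y| / s / s / s := by gcongr
        _ = _ := by field_simp)
  have hk := core_bound hY hs hsum h3 hT
  have e : ∀ z : ℝ, s * z / s = z := fun z => by field_simp
  simp only [e] at hk
  have := le_of_abs_le hk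
  unfold _root_.stdGaussian
  linarith
end
end

section
/- Let p > 1, let q = p/(p−1), let φ be an N-function with Fenchel–Legendre transform φ_*, and set C_φ = sup_{x,y>0} [ φ^{-1}(x) φ_*^{-1}(x) / x ] / [ φ^{-1}(y) φ_*^{-1}(y) / y ]. Then 1 ≤ C_φ ≤ 2, and: (1) if φ ≼ x^p, then φ_*(s)/s^q ≥ C_φ^{-q} · φ_*(t)/t^q for all s > t > 0; (2) if x^p ≼ φ, then φ_*(s)/s^q ≤ C_φ^{q} · φ_*(t)/t^q for all s > t > 0. -/
open MeasureTheory ProbabilityTheory Real Filter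

noncomputable section

open scoped ENNReal

section FenchelHelpers

open Set

lemma nf_bdd {φ : ℝ → ℝ} (h : IsNFunction φ) {s : ℝ} (hs : 0 ≤ s) :
    BddAbove ((fun y => s * y - φ y) '' Set.Ici 0) := by
  obtain ⟨-, hnn, -, hinf, -⟩ := h
  obtain ⟨R, hR⟩ := (Filter.eventually_atTop.1 (hinf.eventually_ge_atTop s))
  refine ⟨s * max R 1, ?_⟩
  rintro _ ⟨y, hy, rfl⟩
  have hy : 0 ≤ y := hy
  have h0 := hnn y hy
  show s * y - φ y ≤ _
  rcases le_total y (max R 1) with hle | hle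
  · nlinarith [mul_le_mul_of_nonneg_left hle hs]
  · have hy1 : 0 < y := lt_of_lt_of_le one_pos ((le_max_right R 1).trans hle)
    have h1 := hR y ((le_max_left R 1).trans hle)
    rw [le_div_iff₀ hy1] at h1
    have : 0 ≤ s * max R 1 := mul_nonneg hs (zero_le_one.trans (le_max_right _ _))
    linarith

lemma nf_le_fenchel {φ : ℝ → ℝ} (h : IsNFunction φ) {s y : ℝ} (hs : 0 ≤ s) (hy : 0 ≤ y) :
    s * y - φ y ≤ fenchel φ s :=
  le_csSup (nf_bdd h hs) ⟨y, hy, rfl⟩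

lemma nf_fenchel_le {φ : ℝ → ℝ} {s B : ℝ} (hB : ∀ y, 0 ≤ y → s * y - φ y ≤ B) :
    fenchel φ s ≤ B := by
  refine csSup_le ⟨_, 0, Set.self_mem_Ici, rfl⟩ ?_
  rintro _ ⟨y, hy, rfl⟩
  exact hB y hy

lemma nf_fenchel_nonneg {φ : ℝ → ℝ} (h : IsNFunction φ) {s : ℝ} (hs : 0 < s) :
    0 ≤ fenchel φ s := by
  have h0 := h.2.2.1
  have h1 := (h0.eventually_le_const hs).and self_mem_nhdsWithin
  obtain ⟨e, he, hpos⟩ := h1.exists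
  have hpos : 0 < e := hpos
  rw [div_le_iff₀ hpos] at he
  have := nf_le_fenchel h hs.le hpos.le
  linarith

lemma nf_tendsto {φ : ℝ → ℝ} (h : IsNFunction φ) :
    Tendsto φ (nhdsWithin 0 (Set.Ioi 0)) (nhds 0) := by
  have h1 : Tendsto (fun x : ℝ => x) (nhdsWithin 0 (Set.Ioi 0)) (nhds 0) :=
    tendsto_id.mono_left nhdsWithin_le_nhds
  have h2 := h.2.2.1.mul h1
  rw [mul_zero] at h2
  refine h2.congr' ?_
  filter_upwards [self_mem_nhdsWithin] with x hx
  exact div_mul_cancel₀ _ (ne_of_gt hx)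

/-- `φ(x)/x` is nondecreasing. -/
lemma nf_ratio {φ : ℝ → ℝ} (h : IsNFunction φ) {z y : ℝ} (hz : 0 < z) (hzy : z < y) :
    φ z * y ≤ φ y * z := by
  have h1 : Tendsto (fun x : ℝ => x) (nhdsWithin 0 (Set.Ioi 0)) (nhds 0) :=
    tendsto_id.mono_left nhdsWithin_le_nhds
  have hl : Tendsto (fun e => (φ z - φ e) * (y - z)) (nhdsWithin 0 (Set.Ioi 0))
      (nhds ((φ z - 0) * (y - z))) := (tendsto_const_nhds.sub (nf_tendsto h)).mul_const _
  have hr : Tendsto (fun e => (φ y - φ z) * (z - e)) (nhdsWithin 0 (Set.Ioi 0))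
      (nhds ((φ y - φ z) * (z - 0))) := (tendsto_const_nhds.sub h1).const_mul _
  have key : (φ z - 0) * (y - z) ≤ (φ y - φ z) * (z - 0) := by
    refine le_of_tendsto_of_tendsto hl hr ?_
    have hlt : ∀ᶠ e in nhdsWithin (0:ℝ) (Set.Ioi 0), e < z :=
      nhdsWithin_le_nhds (eventually_lt_nhds hz)
    filter_upwards [self_mem_nhdsWithin, hlt] with e he hez
    have he : 0 < e := he
    have := h.1.slope_mono_adjacent (x := e) (y := z) (z := y) he.le (hz.trans hzy).le hez hzy
    rwa [div_le_div_iff₀ (by linarith) (by linarith)] at this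
  nlinarith

lemma nf_ninv_nonneg (φ : ℝ → ℝ) (x : ℝ) : 0 ≤ ninv φ x :=
  Real.sInf_nonneg fun _ h => h.1

lemma nf_bddBelow (φ : ℝ → ℝ) (x : ℝ) : BddBelow {z : ℝ | 0 ≤ z ∧ x ≤ φ z} :=
  ⟨0, fun _ h => h.1⟩

lemma nf_lt_of_lt_ninv {φ : ℝ → ℝ} {x z : ℝ} (hz : 0 ≤ z) (hlt : z < ninv φ x) : φ z < x := by
  by_contra hcon
  push Not at hcon
  exact absurd (csInf_le (nf_bddBelow φ x) ⟨hz, hcon⟩) (not_le.2 hlt)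

lemma nf_upper {φ : ℝ → ℝ} (h : IsNFunction φ) {x : ℝ} (hx : 0 < x) :
    ninv φ x * ninv (fenchel φ) x ≤ 2 * x := by
  rcases (nf_ninv_nonneg φ x).eq_or_lt with ha | ha
  · rw [← ha]; linarith
  rcases (nf_ninv_nonneg (fenchel φ) x).eq_or_lt with hb | hb
  · rw [← hb]; linarith
  set a := ninv φ x with hadef
  set b := ninv (fenchel φ) x with hbdef
  have step : ∀ θ : ℝ, θ ∈ Set.Ioo (0:ℝ) 1 → (θ * a) * (θ * b) ≤ 2 * x := by
    intro θ hθ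
    have h1 : φ (θ * a) < x := nf_lt_of_lt_ninv (by have := hθ.1; positivity)
      (by rw [← hadef]; nlinarith [hθ.2])
    have h2 : fenchel φ (θ * b) < x := nf_lt_of_lt_ninv (by have := hθ.1; positivity)
      (by rw [← hbdef]; nlinarith [hθ.2])
    have h3 := nf_le_fenchel h (s := θ * b) (y := θ * a)
      (by have := hθ.1; positivity) (by have := hθ.1; positivity)
    nlinarith
  have ht : Tendsto (fun θ : ℝ => (θ * a) * (θ * b)) (nhdsWithin 1 (Set.Iio 1))
      (nhds ((1 * a) * (1 * b))) := by
    refine Tendsto.mono_left (Continuous.tendsto ?_ 1) nhdsWithin_le_nhds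
    fun_prop
  have := le_of_tendsto ht (b := 2 * x) (by
    have hlt : ∀ᶠ e in nhdsWithin (1:ℝ) (Set.Iio 1), 0 < e :=
      nhdsWithin_le_nhds (eventually_gt_nhds one_pos)
    filter_upwards [self_mem_nhdsWithin, hlt] with e he hez
    exact step e ⟨hez, he⟩)
  simpa using this

lemma nf_nonempty {φ : ℝ → ℝ} (h : IsNFunction φ) (x : ℝ) :
    {z : ℝ | 0 ≤ z ∧ x ≤ φ z}.Nonempty := by
  obtain ⟨R, hR⟩ := (Filter.eventually_atTop.1 (h.2.2.2.1.eventually_ge_atTop |x|))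
  have h1 : (0:ℝ) < max R 1 := lt_of_lt_of_le one_pos (le_max_right _ _)
  refine ⟨max R 1, h1.le, ?_⟩
  have h2 := hR _ (le_max_left R 1)
  rw [le_div_iff₀ h1] at h2
  nlinarith [le_abs_self x, abs_nonneg x, le_max_right R 1]

lemma nf_fenchel_nonempty {φ : ℝ → ℝ} (h : IsNFunction φ) (x : ℝ) :
    {z : ℝ | 0 ≤ z ∧ x ≤ fenchel φ z}.Nonempty := by
  have h1 := h.2.1 1 zero_le_one
  have h2 : 0 ≤ |x| + φ 1 := by positivity
  refine ⟨|x| + φ 1, h2, ?_⟩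
  have := nf_le_fenchel h h2 zero_le_one
  linarith [le_abs_self x]

lemma nf_lower {φ : ℝ → ℝ} (h : IsNFunction φ) {x : ℝ} (hx : 0 < x) (ha : 0 < ninv φ x) :
    x ≤ ninv φ x * ninv (fenchel φ) x := by
  rw [mul_comm, ← div_le_iff₀ ha]
  refine le_csInf (nf_fenchel_nonempty h x) ?_
  rintro b ⟨hb0, hb⟩
  by_contra hcon
  push Not at hcon
  have hba : b * ninv φ x < x := by rwa [lt_div_iff₀ ha] at hcon
  have : fenchel φ b ≤ b * ninv φ x := by
    refine nf_fenchel_le fun y hy => ?_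
    have hφy := h.2.1 y hy
    rcases le_or_gt y (ninv φ x) with hle | hgt
    · nlinarith [mul_le_mul_of_nonneg_left hle hb0]
    · have hpos : 0 ≤ b * ninv φ x := mul_nonneg hb0 ha.le
      rcases hb0.eq_or_lt with hb1 | hb1
      · rw [← hb1]; linarith
      have hlt : ninv φ x < min y (x / b) :=
        lt_min hgt (by rw [lt_div_iff₀ hb1]; linarith)
      obtain ⟨z, ⟨hz0, hz⟩, hzlt⟩ := exists_lt_of_csInf_lt (nf_nonempty h x) hlt
      have hzpos : 0 < z := lt_of_lt_of_le ha (csInf_le (nf_bddBelow φ x) ⟨hz0, hz⟩)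
      have hzy : z < y := hzlt.trans_le (min_le_left _ _)
      have hzb : z * b < x := by
        have := hzlt.trans_le (min_le_right _ _)
        rwa [lt_div_iff₀ hb1] at this
      have hr := nf_ratio h hzpos hzy
      have h3 : (b * y) * z ≤ φ y * z := by
        have h4 : z * b * y ≤ φ z * y := mul_le_mul_of_nonneg_right (hzb.le.trans hz) hy
        linarith
      have := le_of_mul_le_mul_right h3 hzpos
      linarith
  linarith

lemma nf_ratio_le {φ : ℝ → ℝ} (h : IsNFunction φ) {x y : ℝ} (hx : 0 < x) (hy : 0 < y) :
    (ninv φ x * ninv (fenchel φ) x / x) / (ninv φ y * ninv (fenchel φ) y / y) ≤ 2 := by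
  rcases (nf_ninv_nonneg φ y).eq_or_lt with ha | ha
  · rw [← ha]; simp
  have h1 : 1 ≤ ninv φ y * ninv (fenchel φ) y / y := by
    rw [le_div_iff₀ hy, one_mul]; exact nf_lower h hy ha
  have h2 : ninv φ x * ninv (fenchel φ) x / x ≤ 2 := by
    rw [div_le_iff₀ hx]; exact nf_upper h hx
  rw [div_le_iff₀ (by linarith)]
  linarith

lemma nf_const_le {φ : ℝ → ℝ} (h : IsNFunction φ) : nratioConst φ ≤ 2 := by
  refine csSup_le ⟨_, 1, one_pos, 1, one_pos, rfl⟩ ?_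
  rintro _ ⟨x, hx, y, hy, rfl⟩
  exact nf_ratio_le h hx hy

lemma nf_one_le_const {φ : ℝ → ℝ} (h : IsNFunction φ) : 1 ≤ nratioConst φ := by
  have hn0 := h.2.1 0 le_rfl
  have hn1 := h.2.1 1 zero_le_one
  set x := φ 0 + φ 1 + 1 with hxdef
  have hx : 0 < x := by positivity
  have ha : 0 < ninv φ x := by
    refine lt_of_lt_of_le one_pos (le_csInf (nf_nonempty h x) ?_)
    rintro z ⟨hz0, hz⟩
    by_contra hcon
    push Not at hcon
    have := h.1.2 (Set.mem_Ici.2 (le_refl (0:ℝ))) (Set.mem_Ici.2 (zero_le_one (α := ℝ)))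
      (show 0 ≤ 1 - z by linarith) hz0 (by ring)
    simp only [smul_eq_mul, mul_zero, mul_one, zero_add] at this
    nlinarith
  have hl := nf_lower h hx ha
  refine le_csSup ⟨2, ?_⟩ ⟨x, hx, x, hx, ?_⟩
  · rintro _ ⟨x, hx, y, hy, rfl⟩
    exact nf_ratio_le h hx hy
  · rw [div_self]
    have : 0 < ninv φ x * ninv (fenchel φ) x / x := div_pos (by linarith) hx
    exact this.ne'

lemma nf_scaling {p q : ℝ} (hp : 1 < p) (hq : q = p / (p - 1)) {m : ℝ} (hm : 1 < m) :
    ∃ l : ℝ, 1 < l ∧ l ^ p = m ^ q ∧ m * l = l ^ p := by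
  have hp1 : 0 < p - 1 := by linarith
  have hm0 : 0 < m := by linarith
  refine ⟨m ^ (1 / (p - 1)), Real.one_lt_rpow hm (by positivity), ?_, ?_⟩
  · rw [← Real.rpow_mul hm0.le, hq]; congr 1; field_simp
  · rw [← Real.rpow_mul hm0.le]
    nth_rewrite 1 [← Real.rpow_one m]
    rw [← Real.rpow_add hm0]; congr 1; field_simp; ring

lemma nf_part1 {p q : ℝ} (hp : 1 < p) (hq : q = p / (p - 1)) {φ : ℝ → ℝ} (h : IsNFunction φ)
    (hd : Dominates φ (fun x => x ^ p)) {m t : ℝ} (hm : 1 < m) (ht : 0 < t) :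
    m ^ q * fenchel φ t ≤ fenchel φ (m * t) := by
  obtain ⟨l, hl, hlp, hml⟩ := nf_scaling hp hq hm
  have hl0 : 0 < l := by linarith
  have hP : 0 < l ^ p := Real.rpow_pos_of_pos hl0 p
  have hmt : 0 < m * t := by positivity
  rw [← hlp, mul_comm, ← le_div_iff₀ hP]
  refine nf_fenchel_le fun y hy => ?_
  rw [le_div_iff₀ hP]
  rcases hy.eq_or_lt with hy0 | hy0
  · rw [← hy0]
    have h1 := nf_fenchel_nonneg h hmt
    have h2 := h.2.1 0 le_rfl
    nlinarith
  have hly : y < l * y := by nlinarith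
  have hmono := hd (Set.mem_Ioi.2 hy0) (Set.mem_Ioi.2 (hy0.trans hly)) hly.le
  simp only at hmono
  have f1 := h.2.2.2.2 y hy0
  have f2 := h.2.2.2.2 (l * y) (hy0.trans hly)
  rw [Real.mul_rpow hl0.le hy0.le, div_le_div_iff₀ f1 f2] at hmono
  have hyp : 0 < y ^ p := Real.rpow_pos_of_pos hy0 p
  have h3 : φ (l * y) ≤ l ^ p * φ y := by
    refine le_of_mul_le_mul_left (a := y ^ p) ?_ hyp
    linarith
  have h4 := nf_le_fenchel h hmt.le (hy0.trans hly).le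
  have h5 : m * t * (l * y) = l ^ p * (t * y) := by rw [← hml]; ring
  linarith

lemma nf_part2 {p q : ℝ} (hp : 1 < p) (hq : q = p / (p - 1)) {φ : ℝ → ℝ} (h : IsNFunction φ)
    (hd : Dominates (fun x => x ^ p) φ) {m t : ℝ} (hm : 1 < m) (ht : 0 < t) :
    fenchel φ (m * t) ≤ m ^ q * fenchel φ t := by
  obtain ⟨l, hl, hlp, hml⟩ := nf_scaling hp hq hm
  have hl0 : 0 < l := by linarith
  have hP : 0 < l ^ p := Real.rpow_pos_of_pos hl0 p
  rw [← hlp]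
  have hF := nf_fenchel_nonneg h ht
  refine nf_fenchel_le fun w hw => ?_
  rcases hw.eq_or_lt with hw0 | hw0
  · rw [← hw0]
    have h2 := h.2.1 0 le_rfl
    have := mul_nonneg hP.le hF
    linarith
  obtain ⟨y, hy0, rfl⟩ : ∃ y, 0 < y ∧ l * y = w := ⟨w / l, by positivity, by field_simp⟩
  have hly : y < l * y := by nlinarith
  have hmono := hd (Set.mem_Ioi.2 hy0) (Set.mem_Ioi.2 (hy0.trans hly)) hly.le
  simp only at hmono
  have hyp : 0 < y ^ p := Real.rpow_pos_of_pos hy0 p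
  rw [Real.mul_rpow hl0.le hy0.le, div_le_div_iff₀ hyp (by positivity)] at hmono
  have h3 : l ^ p * φ y ≤ φ (l * y) := by
    refine le_of_mul_le_mul_left (a := y ^ p) ?_ hyp
    linarith
  have h4 := mul_le_mul_of_nonneg_left (nf_le_fenchel h ht.le hy0.le) hP.le
  have h5 : m * t * (l * y) = l ^ p * (t * y) := by rw [← hml]; ring
  linarith

end FenchelHelpers

/-- Lemma 4.6: comparison of the Fenchel–Legendre transform `φ_*` with power functions. -/
theorem fenchel_power_comparison (p : ℝ) (hp : 1 < p) (q : ℝ) (hq : q = p / (p - 1))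
    (φ : ℝ → ℝ) (hφ : IsNFunction φ) :
    1 ≤ nratioConst φ ∧ nratioConst φ ≤ 2 ∧
    (Dominates φ (fun x => x ^ p) →
      ∀ s t : ℝ, 0 < t → t < s →
        nratioConst φ ^ (-q) * (fenchel φ t / t ^ q) ≤ fenchel φ s / s ^ q) ∧
    (Dominates (fun x => x ^ p) φ →
      ∀ s t : ℝ, 0 < t → t < s →
        fenchel φ s / s ^ q ≤ nratioConst φ ^ q * (fenchel φ t / t ^ q)) := by
  have hC := nf_one_le_const hφ
  have hq0 : 0 ≤ q := by rw [hq]; exact div_nonneg (by linarith) (by linarith)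
  refine ⟨hC, nf_const_le hφ, ?_, ?_⟩
  · intro hd s t ht hts
    have hs : 0 < s := ht.trans hts
    have h1 := nf_part1 hp hq hφ hd (m := s / t) (by rwa [one_lt_div ht]) ht
    rw [div_mul_cancel₀ _ ht.ne', Real.div_rpow hs.le ht.le] at h1
    have hF := nf_fenchel_nonneg hφ ht
    have hsq : 0 < s ^ q := Real.rpow_pos_of_pos hs q
    have htq : 0 < t ^ q := Real.rpow_pos_of_pos ht q
    have h2 : fenchel φ t / t ^ q ≤ fenchel φ s / s ^ q := by
      rw [le_div_iff₀ hsq]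
      calc fenchel φ t / t ^ q * s ^ q = s ^ q / t ^ q * fenchel φ t := by ring
        _ ≤ _ := h1
    have h3 : nratioConst φ ^ (-q) ≤ 1 :=
      Real.rpow_le_one_of_one_le_of_nonpos hC (by linarith)
    have h4 : 0 ≤ fenchel φ t / t ^ q := div_nonneg hF htq.le
    exact (mul_le_of_le_one_left h4 h3).trans h2
  · intro hd s t ht hts
    have hs : 0 < s := ht.trans hts
    have h1 := nf_part2 hp hq hφ hd (m := s / t) (by rwa [one_lt_div ht]) ht
    rw [div_mul_cancel₀ _ ht.ne', Real.div_rpow hs.le ht.le] at h1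
    have hF := nf_fenchel_nonneg hφ ht
    have hsq : 0 < s ^ q := Real.rpow_pos_of_pos hs q
    have htq : 0 < t ^ q := Real.rpow_pos_of_pos ht q
    have h2 : fenchel φ s / s ^ q ≤ fenchel φ t / t ^ q := by
      rw [div_le_iff₀ hsq]
      calc fenchel φ s ≤ s ^ q / t ^ q * fenchel φ t := h1
        _ = _ := by ring
    have h3 : 1 ≤ nratioConst φ ^ q := Real.one_le_rpow hC hq0
    have h4 : 0 ≤ fenchel φ t / t ^ q := div_nonneg hF htq.le
    exact h2.trans (le_mul_of_one_le_left h4 h3)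
end
end
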